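/- Let G be a finite group, P a Sylow p-subgroup of G, and N a normal subgroup of G. If P ∩ N ≤ Φ(P), then N is p-nilpotent. -/

import Mathlib

/-- A group `G` is `p`-nilpotent if it has a normal `p`-complement: a normal subgroup
of order prime to `p` whose index is a power of `p`. -/
def IsPNilpotent (p : ℕ) (G : Type) [Group G] : Prop :=
  ∃ K : Subgroup G, K.Normal ∧ ¬ p ∣ Nat.card K ∧ ∃ m : ℕ, K.index = p ^ m

/-!
Let `P` be a nilpotent Hall subgroup of `G`. Replacing `G` by `P ⊔ N`, choose `K ≤ N` minimal among
the normal subgroups of `G` with `K ⊔ P = ⊤`, and put `Q = K ∩ P` and `R = ⁅Q, P⁆`. The map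
`P ⧸ R → P ⧸ Q ≃ G ⧸ K` has central kernel, and the projection `G → G ⧸ K` lifts through it over
`P`. Since `|P|` is prime to the index of `P`, a transfer argument yields a lift `f : G → P ⧸ R`
over all of `G`. As `Q ≤ Φ(P)`, the lift `f` is surjective, and its kernel is contained in `K`.
Minimality of `K` forces `f.ker = K`; hence `R = Q`, so `Q = 1` because `P` is nilpotent, and `K` is
a normal complement of `P`.
-/

open Subgroup Function

section CentralExtension

variable {E G : Type*} [Group E] [Group G]

open scoped IsMulCommutative in
theorem exists_retraction_of_coprime_index {Z H : Subgroup E} [H.FiniteIndex]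
    (hZ : Z ≤ center E) (hZH : Z ≤ H) (φ : H →* Z) (hφ : ∀ z, φ (inclusion hZH z) = z)
    (hco : (Nat.card Z).Coprime H.index) : ∃ T : E →* Z, ∀ z : Z, T z = z := by
  have : IsMulCommutative Z := ⟨⟨fun a b ↦ Subtype.ext (mem_center_iff.1 (hZ b.2) a)⟩⟩
  let powIndex : Z ≃* Z := MulEquiv.ofBijective (powMonoidHom H.index) (powCoprime hco).bijective
  refine ⟨powIndex.symm.toMonoidHom.comp φ.transfer, fun z ↦ powIndex.symm_apply_eq.2 ?_⟩
  have conj_pow (k : ℕ) (g : E) : g⁻¹ * (z : E) ^ k * g = (z : E) ^ k := by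
    rw [mul_assoc, ← mem_center_iff.1 (pow_mem (hZ z.2) k) g, inv_mul_cancel_left]
  calc φ.transfer z = φ (inclusion hZH (z ^ H.index)) :=
        φ.transfer_eq_pow _ fun k g _ ↦ conj_pow k g
    _ = z ^ H.index := hφ _

variable {q : E →* G}

theorem exists_retraction_of_section (hq : q.ker ≤ center E) {H : Subgroup G} (σ : H →* E)
    (hσ : ∀ h, q (σ h) = h) :
    ∃ φ : H.comap q →* q.ker, ∀ z, φ (inclusion (ker_le_comap q H) z) = z := by
  let σq : H.comap q →* E := σ.comp (q.subgroupComap H)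
  have mem_ker (x : H.comap q) : x * (σq x)⁻¹ ∈ q.ker := by
    rw [MonoidHom.mem_ker, map_mul, map_inv, MonoidHom.comp_apply, hσ]
    exact mul_inv_cancel _
  refine ⟨MonoidHom.mk' (fun x ↦ ⟨x * (σq x)⁻¹, mem_ker x⟩) fun x y ↦ Subtype.ext ?_, fun z ↦ ?_⟩
  · have comm := mem_center_iff.1 (hq (mem_ker y)) (σq x)⁻¹
    simp only [map_mul, coe_mul, mul_inv_rev, mul_assoc] at comm ⊢
    rw [comm]
  · have σq_ker : σq (inclusion (ker_le_comap q H) z) = 1 := by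
      have subgroupComap_ker : q.subgroupComap H (inclusion (ker_le_comap q H) z) = 1 :=
        Subtype.ext z.2
      rw [MonoidHom.comp_apply, subgroupComap_ker, map_one]
    exact Subtype.ext (by simp [σq_ker])

theorem exists_section_of_retraction (hq : Surjective q) (T : E →* q.ker)
    (hT : ∀ z : q.ker, T z = z) : ∃ s : G →* E, q.comp s = MonoidHom.id G := by
  have bijective : Bijective (q.comp T.ker.subtype) := by
    refine ⟨(injective_iff_map_eq_one _).2 fun x hx ↦ ?_, fun g ↦ ?_⟩
    · have eq_one : (⟨x, hx⟩ : q.ker) = 1 := (hT ⟨x, hx⟩).symm.trans x.2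
      exact Subtype.ext (q.ker.mk_eq_one.1 eq_one)
    · obtain ⟨e, rfl⟩ := hq g
      refine ⟨⟨e * (T e : E)⁻¹, ?_⟩, ?_⟩
      · rw [MonoidHom.mem_ker, map_mul, map_inv, hT, mul_inv_cancel]
      · have : q (T e) = 1 := (T e).2
        simp [this]
  let kerEquiv : T.ker ≃* G := MulEquiv.ofBijective _ bijective
  exact ⟨T.ker.subtype.comp kerEquiv.symm.toMonoidHom, MonoidHom.ext kerEquiv.apply_symm_apply⟩

theorem exists_section_of_coprime_index (hq : Surjective q) (hcen : q.ker ≤ center E)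
    {H : Subgroup G} [H.FiniteIndex] (σ : H →* E) (hσ : ∀ h, q (σ h) = h)
    (hco : (Nat.card q.ker).Coprime H.index) : ∃ s : G →* E, q.comp s = MonoidHom.id G := by
  obtain ⟨φ, hφ⟩ := exists_retraction_of_section hcen σ hσ
  have index_comap : (H.comap q).index = H.index := index_comap_of_surjective H hq
  have : (H.comap q).FiniteIndex := ⟨index_comap ▸ FiniteIndex.index_ne_zero⟩
  obtain ⟨T, hT⟩ := exists_retraction_of_coprime_index hcen (ker_le_comap q H) φ hφ
    (index_comap ▸ hco)
  exact exists_section_of_retraction hq T hT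

theorem exists_lift_of_coprime_index {B C : Type*} [Group B] [Group C] (κ : G →* C) {π : B →* C}
    (hπ : Surjective π) (hcen : π.ker ≤ center B) {H : Subgroup G} [H.FiniteIndex] (θ : H →* B)
    (hθ : ∀ h, π (θ h) = κ h) (hco : (Nat.card π.ker).Coprime H.index) :
    ∃ f : G →* B, π.comp f = κ := by
  let pullback : Subgroup (G × B) :=
    (κ.comp (MonoidHom.fst G B)).eqLocus (π.comp (MonoidHom.snd G B))
  let fst : pullback →* G := (MonoidHom.fst G B).comp pullback.subtype
  let snd : pullback →* B := (MonoidHom.snd G B).comp pullback.subtype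
  have condition (e : pullback) : π (snd e) = κ (fst e) := e.2.symm
  have fst_surjective : Surjective fst := fun g ↦
    let ⟨b, hb⟩ := hπ (κ g)
    ⟨⟨(g, b), hb.symm⟩, rfl⟩
  have snd_mem_ker (e : fst.ker) : snd e ∈ π.ker := by
    rw [MonoidHom.mem_ker, condition, e.2, map_one]
  have ker_fst_le_center : fst.ker ≤ center pullback := fun e he ↦ mem_center_iff.2 fun x ↦
    Subtype.ext <| Prod.ext (by simp [show e.1.1 = 1 from he])
      (mem_center_iff.1 (hcen (snd_mem_ker ⟨e, he⟩)) _)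
  have card_ker_fst_dvd : Nat.card fst.ker ∣ Nat.card π.ker :=
    card_dvd_of_injective ((snd.comp fst.ker.subtype).codRestrict π.ker snd_mem_ker) fun x y h ↦
      Subtype.ext <| Subtype.ext <| Prod.ext (x.2.trans y.2.symm) (congrArg Subtype.val h)
  let σ : H →* pullback := (H.subtype.prod θ).codRestrict pullback fun h ↦ (hθ h).symm
  obtain ⟨s, hs⟩ := exists_section_of_coprime_index fst_surjective ker_fst_le_center σ
    (fun _ ↦ rfl) (hco.coprime_dvd_left card_ker_fst_dvd)
  exact ⟨snd.comp s, MonoidHom.ext fun g ↦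
    (condition (s g)).trans (congrArg κ (DFunLike.congr_fun hs g))⟩

end CentralExtension

section Group

variable {G : Type*} [Group G]

theorem surjective_of_ker_comp_le_frattini {X B C : Type*} [Group X] [Group B] [Group C]
    [IsCoatomic (Subgroup G)] {θ : G →* B} {π : B →* C} {f : X →* B} (hθ : Surjective θ)
    (hker : (π.comp θ).ker ≤ frattini G) (hf : Surjective (π.comp f)) : Surjective f := by
  have range_sup_ker : f.range ⊔ π.ker = ⊤ := by
    rw [← comap_map_eq, ← MonoidHom.range_comp, MonoidHom.range_eq_top.2 hf, comap_top]
  have comap_range : f.range.comap θ = ⊤ := frattini_nongenerating <| top_le_iff.1 <|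
    calc ⊤ = f.range.comap θ ⊔ (π.comp θ).ker := by
          rw [← MonoidHom.comap_ker, comap_sup_eq _ _ _ hθ, range_sup_ker, comap_top]
      _ ≤ f.range.comap θ ⊔ frattini G := sup_le_sup_left hker _
  rw [← MonoidHom.range_eq_top, ← map_comap_eq_self_of_surjective hθ f.range, comap_range,
    map_top_of_surjective θ hθ]

theorem eq_bot_of_le_commutator_top [Group.IsNilpotent G] {Q : Subgroup G}
    (hQ : Q ≤ ⁅Q, (⊤ : Subgroup G)⁆) : Q = ⊥ := by
  obtain ⟨n, hn⟩ := Subgroup.nilpotent_iff_lowerCentralSeries.1 ‹Group.IsNilpotent G›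
  have le_lowerCentralSeries (k : ℕ) : Q ≤ (⊤ : Subgroup G).lowerCentralSeries k := by
    induction k with
    | zero => exact le_top
    | succ k ih => exact hQ.trans (commutator_mono ih le_rfl)
  exact le_bot_iff.1 (hn ▸ le_lowerCentralSeries n)

theorem map_mk'_le_center {Q R : Subgroup G} [R.Normal] (h : ⁅Q, (⊤ : Subgroup G)⁆ ≤ R) :
    Q.map (QuotientGroup.mk' R) ≤ center (G ⧸ R) := by
  rw [← centralizer_univ, ← coe_top, ← commutator_eq_bot_iff_le_centralizer,
    ← map_top_of_surjective _ (QuotientGroup.mk'_surjective R), ← map_commutator,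
    Subgroup.map_eq_bot_iff, QuotientGroup.ker_mk']
  exact h

theorem sup_eq_top_of_coprime_index {H K : Subgroup G} (h : H.index.Coprime K.index) :
    H ⊔ K = ⊤ :=
  index_eq_one.1 <|
    Nat.eq_one_of_dvd_coprimes h (index_dvd_of_le le_sup_left) (index_dvd_of_le le_sup_right)

theorem index_subgroupOf_of_sup_eq_top {K H : Subgroup G} [K.Normal] (h : K ⊔ H = ⊤) :
    (K.subgroupOf H).index = K.index := by
  rw [← K.relIndex_top_right, ← h, relIndex_sup_left, relIndex]

theorem mk'_comp_subtype_surjective {K H : Subgroup G} [K.Normal] (h : K ⊔ H = ⊤) :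
    Surjective ((QuotientGroup.mk' K).comp H.subtype) := by
  rw [← MonoidHom.range_eq_top, MonoidHom.range_comp, range_subtype, ← bot_sup_eq (H.map _),
    ← QuotientGroup.map_mk'_self K, ← Subgroup.map_sup, h,
    map_top_of_surjective _ (QuotientGroup.mk'_surjective K)]

theorem isComplement'_of_normal_of_isCompl {K H : Subgroup G} [K.Normal] (h : IsCompl K H) :
    IsComplement' K H :=
  isComplement'_of_disjoint_and_mul_eq_univ h.disjoint <| by
    rw [← normal_mul, h.sup_eq_top, coe_top]

theorem subgroupOf_subgroupOf_le_frattini {P S N : Subgroup G} (hPS : P ≤ S)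
    (hΦ : N.subgroupOf P ≤ frattini P) :
    (N.subgroupOf S).subgroupOf (P.subgroupOf S) ≤ frattini (P.subgroupOf S) := fun x hx ↦
  frattini_le_comap_frattini_of_surjective (φ := (subgroupOfEquivOfLe hPS).symm.toMonoidHom)
    (subgroupOfEquivOfLe hPS).symm.surjective (hΦ (x := subgroupOfEquivOfLe hPS x) hx)

end Group

section NilpotentHall

variable {G : Type*} [Group G] [Finite G] {P K : Subgroup G}

theorem exists_normal_le_index_eq_index_commutator [K.Normal] (hco : (Nat.card P).Coprime P.index)
    (hKP : K ⊔ P = ⊤) (hΦ : K.subgroupOf P ≤ frattini P) :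
    ∃ L ≤ K, L.Normal ∧ L.index = ⁅K.subgroupOf P, (⊤ : Subgroup P)⁆.index := by
  set Q := K.subgroupOf P
  set R := ⁅Q, (⊤ : Subgroup P)⁆
  have hRQ : R ≤ Q := commutator_le_left Q ⊤
  let θ : P →* P ⧸ R := QuotientGroup.mk' R
  let π : P ⧸ R →* G ⧸ K := QuotientGroup.map R K P.subtype hRQ
  have hθ : Surjective θ := QuotientGroup.mk'_surjective R
  have ker_comp : (π.comp θ).ker = Q := by
    rw [show π.comp θ = (QuotientGroup.mk' K).comp P.subtype from rfl, ← MonoidHom.comap_ker,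
      QuotientGroup.ker_mk']
    rfl
  have ker_eq : π.ker = Q.map θ := by
    rw [← map_comap_eq_self_of_surjective hθ π.ker, MonoidHom.comap_ker, ker_comp]
  have hπ : Surjective π := .of_comp (g := θ) (mk'_comp_subtype_surjective hKP)
  have coprime : (Nat.card π.ker).Coprime P.index :=
    hco.coprime_dvd_left ((card_subgroup_dvd_card _).trans (card_quotient_dvd_card R))
  obtain ⟨f, hf⟩ := exists_lift_of_coprime_index (QuotientGroup.mk' K) hπ
    (ker_eq.trans_le (map_mk'_le_center le_rfl)) θ (fun _ ↦ rfl) coprime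
  have f_surjective : Surjective f := surjective_of_ker_comp_le_frattini hθ
    (ker_comp.trans_le hΦ) (hf ▸ QuotientGroup.mk'_surjective K)
  refine ⟨f.ker, ?_, inferInstance, ?_⟩
  · calc f.ker ≤ (π.comp f).ker := MonoidHom.comap_ker π f ▸ ker_le_comap f _
      _ = K := by rw [hf, QuotientGroup.ker_mk']
  · rw [index_ker, MonoidHom.range_eq_top.2 f_surjective, card_top, index]

theorem exists_normal_isComplement'_of_sup_eq_top [Group.IsNilpotent P] [hK : K.Normal]
    (hco : (Nat.card P).Coprime P.index) (hKP : K ⊔ P = ⊤) (hΦ : K.subgroupOf P ≤ frattini P) :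
    ∃ L : Subgroup G, L.Normal ∧ IsComplement' L P := by
  obtain ⟨L, hLK, ⟨hL, hLP⟩, hmin⟩ := exists_minimal_le_of_wellFoundedLT
    (fun L : Subgroup G ↦ L.Normal ∧ L ⊔ P = ⊤) K ⟨hK, hKP⟩
  obtain ⟨M, hML, hM, hM_index⟩ := exists_normal_le_index_eq_index_commutator hco hLP
    ((comap_mono hLK).trans hΦ)
  have hMP : M ⊔ P = ⊤ := sup_eq_top_of_coprime_index <|
    hco.coprime_dvd_left (hM_index ▸ index_dvd_card _)
  obtain rfl : M = L := hML.antisymm (hmin ⟨hM, hMP⟩ hML)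
  have commutator_eq : ⁅M.subgroupOf P, (⊤ : Subgroup P)⁆ = M.subgroupOf P :=
    (commutator_le_left _ ⊤).eq_of_not_lt fun hlt ↦
      (index_strictAnti hlt).ne ((index_subgroupOf_of_sup_eq_top hMP).trans hM_index)
  have disjoint : Disjoint M P := subgroupOf_eq_bot.1 (eq_bot_of_le_commutator_top commutator_eq.ge)
  exact ⟨M, hM, isComplement'_of_normal_of_isCompl ⟨disjoint, codisjoint_iff.2 hMP⟩⟩

theorem pNilpotent_of_inter_le_frattini_general [Group.IsNilpotent P]
    (hco : (Nat.card P).Coprime P.index) {N : Subgroup G} [N.Normal]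
    (hΦ : N.subgroupOf P ≤ frattini P) :
    ∃ K : Subgroup N, K.Normal ∧ Nat.card K ∣ P.index ∧ K.index ∣ Nat.card P := by
  set S := P ⊔ N
  have hPS : P ≤ S := le_sup_left
  have hNS : N ≤ S := le_sup_right
  let e : P.subgroupOf S ≃* P := subgroupOfEquivOfLe hPS
  have card_P : Nat.card (P.subgroupOf S) = Nat.card P := Nat.card_congr e.toEquiv
  have index_dvd : (P.subgroupOf S).index ∣ P.index := relIndex_dvd_index_of_le hPS
  have sup_eq_top : N.subgroupOf S ⊔ P.subgroupOf S = ⊤ := by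
    rw [← subgroupOf_sup hNS hPS, sup_comm, subgroupOf_self]
  have : Group.IsNilpotent (P.subgroupOf S) := Group.nilpotent_of_mulEquiv e.symm
  obtain ⟨L, hL, hLP⟩ := exists_normal_isComplement'_of_sup_eq_top
    (card_P.symm ▸ hco.coprime_dvd_right index_dvd) sup_eq_top
    (subgroupOf_subgroupOf_le_frattini hPS hΦ)
  refine ⟨L.comap (inclusion hNS), inferInstance, ?_, ?_⟩
  · exact (card_comap_dvd_of_injective L _ (inclusion_injective hNS)).trans
      (hLP.index_eq_card ▸ index_dvd)
  · rw [index_comap, ← card_P, ← hLP.symm.index_eq_card]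
    exact relIndex_dvd_index_of_normal L _

end NilpotentHall

theorem isPNilpotent_of_card_dvd_index_of_index_dvd_card {G : Type*} [Group G] [Finite G] {p : ℕ}
    [Fact p.Prime] (P : Sylow p G) {N : Type} [Group N] {K : Subgroup N} [hK : K.Normal]
    (hcard : Nat.card K ∣ P.index) (hindex : K.index ∣ Nat.card P) : IsPNilpotent p N := by
  obtain ⟨n, hn⟩ := IsPGroup.iff_card.1 P.isPGroup'
  obtain ⟨m, -, hm⟩ := (Nat.dvd_prime_pow Fact.out).1 (hn ▸ hindex)
  exact ⟨K, hK, fun hp ↦ P.not_dvd_index (hp.trans hcard), m, hm⟩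

/-- If `P` is a Sylow `p`-subgroup of the finite group `G`, `N ⊴ G`, and
`P ∩ N ≤ Φ(P)`, then `N` is `p`-nilpotent. -/
theorem pNilpotent_of_inter_le_frattini (G : Type) [Group G] [Finite G]
    (p : ℕ) [Fact p.Prime] (P : Sylow p G) (N : Subgroup G) [N.Normal]
    (h : N.subgroupOf (P : Subgroup G) ≤ frattini ↥(P : Subgroup G)) :
    IsPNilpotent p ↥N := by
  have := P.isPGroup'.isNilpotent
  obtain ⟨K, _, hcard, hindex⟩ := pNilpotent_of_inter_le_frattini_general P.card_coprime_index h
  exact isPNilpotent_of_card_dvd_index_of_index_dvd_card P hcard hindex
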